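/- For all indices i ≠ j in {1,…,ℓ} with a_{ij} = −1, all u_1, u_2, v ∈ ℂ, and every function f, at every point γ (in the Cartan/difference-operator setting described in the context) at which all denominators occurring are nonzero: ([E_i(u_1),[E_i(u_2),E_j(v)]]f)(γ) + ([E_i(u_2),[E_i(u_1),E_j(v)]]f)(γ) = 0, where [X,Y] := XY − YX. (This is the Serre relation of the Yangian for n = 1 − a_{ij} = 2, verified for the explicit difference operators.) -/

import Mathlib

/-!
Every word in two operators `E_i` and one `E_j` is a sum, over the moved coordinates `k, k'` of
colour `i` and `l` of colour `j`, of a coefficient times the same shifted value of `f`. Moving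
the `E_j` through the word changes only the polynomial numerators: with `x = γ_{i,k}`,
`x' = γ_{i,k'}`, `y = γ_{j,l}`, `c = h d_i / 2` and `k ≠ k'`, the words `E_i E_i E_j`, `E_i E_j E_i`
and `E_j E_i E_i` have, up to a common factor symmetric in `k, k'`, the numerators
`(x-y-c)(x'-y-c)`, `(x-y-c)(x'-y+c)` and `(x-y+c)(x'-y+c)`. For `i < j` this comes from `κ_{i,k}`
(`num_factor`), for `j < i` from `κ_{j,l}` (`num_rev`). The combination with weights `1, -2, 1`
is `2c (x' - x + 2c)` (`Qn_offdiag`), while for `k = k'` it vanishes (`Qn_diag`).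

The factor `x' - x + 2c` cancels against the denominator `(x - x')(x' - x + 2c)` produced by the two
`E_i`, leaving something antisymmetric under `k ↔ k'`. The prefactors in `u₁, u₂` become symmetric
under this exchange when the two double commutators are added, so the coefficients are antisymmetric
(`coeff_antisymm`) and their double sum is zero.
-/

open Finset

noncomputable section

variable {ℓ : ℕ}

/-- The pairing `(α_i, α_j) = d_i a_{ij}`, as a complex number. -/
def pr (a : Fin ℓ → Fin ℓ → ℤ) (d : Fin ℓ → ℕ) (i j : Fin ℓ) : ℂ :=
  (d i : ℂ) * (a i j : ℂ)

/-- Points: tuples `γ = (γ_{i,k})`, `i ∈ {1,…,ℓ}`, `1 ≤ k ≤ m_i`, of complex numbers. -/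
abbrev Pt {ℓ : ℕ} (m : Fin ℓ → ℕ) : Type := ((i : Fin ℓ) × Fin (m i)) → ℂ

variable {m : Fin ℓ → ℕ}

/-- `P_s(u; γ) = ∏_{p=1}^{m_s} (u − γ_{s,p})`. -/
def Pp (γ : Pt m) (s : Fin ℓ) (u : ℂ) : ℂ :=
  ∏ p : Fin (m s), (u - γ ⟨s, p⟩)

/-- The shifted point `γ + c·e_{i,k}`. -/
def sh (γ : Pt m) (i : Fin ℓ) (k : Fin (m i)) (c : ℂ) : Pt m :=
  fun x => if x = ⟨i, k⟩ then γ x + c else γ x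

/-- The denominator `∏_{p ≠ k} (γ_{i,k} − γ_{i,p})` (an empty product equals 1). -/
def Dk (γ : Pt m) (i : Fin ℓ) (k : Fin (m i)) : ℂ :=
  ∏ p ∈ Finset.univ.erase k, (γ ⟨i, k⟩ - γ ⟨i, p⟩)

/-- The difference operator `κ_{i,k}`:
`(κ_{i,k} f)(γ) = (√d_i)⁻¹ · [∏_{s>i} ∏_{r=1}^{−a_{si}} P_s(γ_{i,k} − (h/2)(α_i+rα_s,α_s); γ)]
  · [∏_{p≠k}(γ_{i,k} − γ_{i,p})]⁻¹ · f(γ − h d_i e_{i,k})`. -/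
def kap (a : Fin ℓ → Fin ℓ → ℤ) (d : Fin ℓ → ℕ) (h : ℂ)
    (i : Fin ℓ) (k : Fin (m i)) (f : Pt m → ℂ) (γ : Pt m) : ℂ :=
  ((Real.sqrt (d i) : ℝ) : ℂ)⁻¹ *
    (∏ s ∈ Finset.univ.filter (fun s => i < s), ∏ r ∈ Finset.range (-(a s i)).toNat,
      Pp γ s (γ ⟨i, k⟩ - h / 2 * (pr a d i s + ((r : ℂ) + 1) * pr a d s s))) *
    (Dk γ i k)⁻¹ * f (sh γ i k (-(h * (d i : ℂ))))

/-- The difference operator `κ′_{i,k}` (depending on the functions `R_i`):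
`(κ′_{i,k} f)(γ) = −(√d_i)⁻¹ · R_i(γ_{i,k} + h d_i)
  · [∏_{s<i} ∏_{r=1}^{−a_{si}} P_s(γ_{i,k} − (h/2)(α_i+rα_s,α_s) + h d_i; γ)]
  · [∏_{p≠k}(γ_{i,k} − γ_{i,p})]⁻¹ · f(γ + h d_i e_{i,k})`. -/
def kap' (a : Fin ℓ → Fin ℓ → ℤ) (d : Fin ℓ → ℕ) (h : ℂ) (R : Fin ℓ → ℂ → ℂ)
    (i : Fin ℓ) (k : Fin (m i)) (f : Pt m → ℂ) (γ : Pt m) : ℂ :=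
  -((Real.sqrt (d i) : ℝ) : ℂ)⁻¹ * R i (γ ⟨i, k⟩ + h * (d i : ℂ)) *
    (∏ s ∈ Finset.univ.filter (fun s => s < i), ∏ r ∈ Finset.range (-(a s i)).toNat,
      Pp γ s (γ ⟨i, k⟩ - h / 2 * (pr a d i s + ((r : ℂ) + 1) * pr a d s s) + h * (d i : ℂ))) *
    (Dk γ i k)⁻¹ * f (sh γ i k (h * (d i : ℂ)))

/-- The multiplication operator `H_i(u)`. -/
def Hop (a : Fin ℓ → Fin ℓ → ℤ) (d : Fin ℓ → ℕ) (h : ℂ) (R : Fin ℓ → ℂ → ℂ)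
    (u : ℂ) (i : Fin ℓ) (f : Pt m → ℂ) (γ : Pt m) : ℂ :=
  R i u *
    (∏ s ∈ Finset.univ.filter (fun s => s ≠ i), ∏ r ∈ Finset.range (-(a s i)).toNat,
      Pp γ s (u - h / 2 * (pr a d i s + ((r : ℂ) + 1) * pr a d s s))) *
    (Pp γ i u * Pp γ i (u - h * (d i : ℂ)))⁻¹ * f γ

/-- The operator `E_i(u) = Σ_{k=1}^{m_i} (u − γ_{i,k})⁻¹ κ_{i,k}`. -/
def Eop (a : Fin ℓ → Fin ℓ → ℤ) (d : Fin ℓ → ℕ) (h : ℂ)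
    (u : ℂ) (i : Fin ℓ) (f : Pt m → ℂ) (γ : Pt m) : ℂ :=
  ∑ k : Fin (m i), (u - γ ⟨i, k⟩)⁻¹ * kap a d h i k f γ

/-- The operator `F_i(u) = Σ_{k=1}^{m_i} κ′_{i,k} (u − γ_{i,k} − h d_i)⁻¹`. -/
def Fop (a : Fin ℓ → Fin ℓ → ℤ) (d : Fin ℓ → ℕ) (h : ℂ) (R : Fin ℓ → ℂ → ℂ)
    (u : ℂ) (i : Fin ℓ) (f : Pt m → ℂ) (γ : Pt m) : ℂ :=
  ∑ k : Fin (m i), (u - γ ⟨i, k⟩ - h * (d i : ℂ))⁻¹ * kap' a d h R i k f γ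

/-- The zero mode `E_i^{(0)} = Σ_{k=1}^{m_i} κ_{i,k}`. -/
def E0 (a : Fin ℓ → Fin ℓ → ℤ) (d : Fin ℓ → ℕ) (h : ℂ)
    (i : Fin ℓ) (f : Pt m → ℂ) (γ : Pt m) : ℂ :=
  ∑ k : Fin (m i), kap a d h i k f γ

/-! ### Shifts and the numerators of `κ_{i,k}` -/

/-- The part `(√d_i)⁻¹ ∏_{s>i} ∏_r P_s(t − (h/2)(α_i+rα_s,α_s); γ)` of the coefficient of
`κ_{i,k}`, with the argument `γ_{i,k}` replaced by a free variable `t`. -/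
def num (a : Fin ℓ → Fin ℓ → ℤ) (d : Fin ℓ → ℕ) (h : ℂ) (i : Fin ℓ) (γ : Pt m) (t : ℂ) : ℂ :=
  ((Real.sqrt (d i) : ℝ) : ℂ)⁻¹ *
    (∏ s ∈ Finset.univ.filter (fun s => i < s), ∏ r ∈ Finset.range (-(a s i)).toNat,
      Pp γ s (t - h / 2 * (pr a d i s + ((r : ℂ) + 1) * pr a d s s)))

/-- `num` with the factors coming from the single index `s = j` left out. -/
def numRest (a : Fin ℓ → Fin ℓ → ℤ) (d : Fin ℓ → ℕ) (h : ℂ) (i j : Fin ℓ) (γ : Pt m)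
    (t : ℂ) : ℂ :=
  ((Real.sqrt (d i) : ℝ) : ℂ)⁻¹ *
    (∏ s ∈ (Finset.univ.filter (fun s => i < s)).erase j,
      ∏ r ∈ Finset.range (-(a s i)).toNat,
      Pp γ s (t - h / 2 * (pr a d i s + ((r : ℂ) + 1) * pr a d s s)))

lemma kap_eq (a : Fin ℓ → Fin ℓ → ℤ) (d : Fin ℓ → ℕ) (h : ℂ)
    (i : Fin ℓ) (k : Fin (m i)) (f : Pt m → ℂ) (γ : Pt m) :
    kap a d h i k f γ = num a d h i γ (γ ⟨i, k⟩) * (Dk γ i k)⁻¹ *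
      f (sh γ i k (-(h * (d i : ℂ)))) := rfl

lemma sh_self (γ : Pt m) (i : Fin ℓ) (k : Fin (m i)) (c : ℂ) :
    sh γ i k c ⟨i, k⟩ = γ ⟨i, k⟩ + c := by simp [sh]

lemma sh_other (γ : Pt m) (i : Fin ℓ) (k p : Fin (m i)) (c : ℂ) (hp : p ≠ k) :
    sh γ i k c ⟨i, p⟩ = γ ⟨i, p⟩ := by simp [sh, hp]

lemma sh_ne (γ : Pt m) (i j : Fin ℓ) (k : Fin (m i)) (l : Fin (m j)) (c : ℂ) (hij : i ≠ j) :
    sh γ j l c ⟨i, k⟩ = γ ⟨i, k⟩ := by simp [sh, hij]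

lemma sh_comm (γ : Pt m) (i j : Fin ℓ) (k : Fin (m i)) (l : Fin (m j)) (c c' : ℂ) :
    sh (sh γ i k c) j l c' = sh (sh γ j l c') i k c := by
  funext x
  simp only [sh]
  split_ifs <;> ring

lemma Pp_sh_ne (γ : Pt m) (s j : Fin ℓ) (l : Fin (m j)) (c u : ℂ) (hs : s ≠ j) :
    Pp (sh γ j l c) s u = Pp γ s u := by
  simp only [Pp, sh_ne _ _ _ _ _ _ hs]

lemma Dk_sh_ne (γ : Pt m) (i j : Fin ℓ) (k : Fin (m i)) (l : Fin (m j)) (c : ℂ) (hij : i ≠ j) :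
    Dk (sh γ j l c) i k = Dk γ i k := by
  simp only [Dk, sh_ne _ _ _ _ _ _ hij]

lemma Pp_eq (γ : Pt m) (j : Fin ℓ) (l : Fin (m j)) (u : ℂ) :
    Pp γ j u = (u - γ ⟨j, l⟩) * ∏ p ∈ Finset.univ.erase l, (u - γ ⟨j, p⟩) :=
  (Finset.mul_prod_erase _ _ (Finset.mem_univ l)).symm

lemma Pp_sh (γ : Pt m) (j : Fin ℓ) (l : Fin (m j)) (c u : ℂ) :
    Pp (sh γ j l c) j u = (u - (γ ⟨j, l⟩ + c)) * ∏ p ∈ Finset.univ.erase l, (u - γ ⟨j, p⟩) := by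
  rw [Pp_eq _ j l, sh_self]
  congr 1
  refine Finset.prod_congr rfl fun p hp => ?_
  rw [sh_other _ _ _ _ _ (Finset.ne_of_mem_erase hp)]

lemma num_sh (a : Fin ℓ → Fin ℓ → ℤ) (d : Fin ℓ → ℕ) (h : ℂ) (i j : Fin ℓ) (l : Fin (m j))
    (γ : Pt m) (c t : ℂ) (hij : ¬ i < j) : num a d h i (sh γ j l c) t = num a d h i γ t := by
  unfold num
  congr 1
  refine Finset.prod_congr rfl fun s hs => Finset.prod_congr rfl fun r _ => Pp_sh_ne _ _ _ _ _ _ ?_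
  rintro rfl
  exact hij (Finset.mem_filter.1 hs).2

lemma numRest_sh (a : Fin ℓ → Fin ℓ → ℤ) (d : Fin ℓ → ℕ) (h : ℂ) (i j : Fin ℓ) (l : Fin (m j))
    (γ : Pt m) (c t : ℂ) : numRest a d h i j (sh γ j l c) t = numRest a d h i j γ t := by
  unfold numRest
  congr 1
  exact Finset.prod_congr rfl fun s hs => Finset.prod_congr rfl fun r _ =>
    Pp_sh_ne _ _ _ _ _ _ (Finset.ne_of_mem_erase hs)

lemma num_eq (a : Fin ℓ → Fin ℓ → ℤ) (d : Fin ℓ → ℕ) (h : ℂ) (i j : Fin ℓ)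
    (γ : Pt m) (t : ℂ) (hij : i < j) :
    num a d h i γ t = numRest a d h i j γ t * ∏ r ∈ Finset.range (-(a j i)).toNat,
      Pp γ j (t - h / 2 * (pr a d i j + ((r : ℂ) + 1) * pr a d j j)) := by
  unfold num numRest
  rw [mul_assoc, Finset.prod_erase_mul _ _ (by simpa using hij)]

/-- For `i < j`, moving `γ_{j,l}` by `−h d_j` turns the linear factor `t − γ_{j,l} − h d_i/2` of the
numerator of `κ_{i,k}` into `t − γ_{j,l} + h d_i/2`: the product over `r` telescopes, because
`−a_{ji} d_j = d_i`. -/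
lemma num_factor (a : Fin ℓ → Fin ℓ → ℤ) (d : Fin ℓ → ℕ)
    (hdiag : ∀ i, a i i = 2) (hdpos : ∀ i, 0 < d i)
    (hsymm : ∀ i j, (d i : ℤ) * a i j = (d j : ℤ) * a j i)
    (h : ℂ) (i j : Fin ℓ) (hij : i < j) (haij : a i j = -1) (l : Fin (m j)) (γ : Pt m) (t : ℂ) :
    ∃ ρ : ℂ, num a d h i γ t = ρ * (t - γ ⟨j, l⟩ - h * d i / 2) ∧
      num a d h i (sh γ j l (-(h * (d j : ℂ)))) t = ρ * (t - γ ⟨j, l⟩ + h * d i / 2) := by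
  have hs := hsymm i j
  rw [haij] at hs
  have hi := hdpos i
  have hj := hdpos j
  have hneg : 0 < -(a j i) := by
    by_contra hcon
    have : 0 ≤ (d j : ℤ) * a j i := mul_nonneg (by positivity) (by linarith)
    have : (0 : ℤ) < d i := by exact_mod_cast hi
    linarith
  obtain ⟨n, hn⟩ : ∃ n : ℕ, -(a j i) = n + 1 := ⟨(-(a j i) - 1).toNat, by omega⟩
  have hnd : (d i : ℂ) = d j * (n + 1) := by
    have : (d i : ℤ) = d j * (n + 1) := by rw [← hn]; linarith
    exact_mod_cast this
  have hN : (-(a j i)).toNat = n + 1 := by omega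
  have hprij : pr a d i j = -(d i : ℂ) := by simp [pr, haij]
  have hprjj : pr a d j j = 2 * (d j : ℂ) := by simp [pr, hdiag]; ring
  rw [num_eq _ _ _ _ _ _ _ hij, num_eq _ _ _ _ _ _ _ hij, numRest_sh, hN, hprij, hprjj]
  simp only [Pp_sh, Pp_eq γ j l, Finset.prod_mul_distrib]
  refine ⟨numRest a d h i j γ t * (∏ r ∈ Finset.range (n + 1),
    ∏ p ∈ Finset.univ.erase l, (t - h / 2 * (-(d i : ℂ) + ((r : ℂ) + 1) * (2 * d j)) - γ ⟨j, p⟩)) *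
    ∏ r ∈ Finset.range n, (t - h / 2 * (-(d i : ℂ) + ((r : ℂ) + 1) * (2 * d j)) - γ ⟨j, l⟩),
    ?_, ?_⟩
  · rw [Finset.prod_range_succ (fun r : ℕ =>
      (t - h / 2 * (-(d i : ℂ) + ((r : ℂ) + 1) * (2 * d j)) - γ ⟨j, l⟩))]
    rw [hnd]
    ring
  · rw [Finset.prod_range_succ' (fun r : ℕ =>
      (t - h / 2 * (-(d i : ℂ) + ((r : ℂ) + 1) * (2 * d j)) - (γ ⟨j, l⟩ + -(h * d j))))]
    have : ∀ r : ℕ, t - h / 2 * (-(d i : ℂ) + (((r + 1 : ℕ) : ℂ) + 1) * (2 * d j)) -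
        (γ ⟨j, l⟩ + -(h * d j)) =
        t - h / 2 * (-(d i : ℂ) + ((r : ℂ) + 1) * (2 * d j)) - γ ⟨j, l⟩ := by
      intro r; push_cast; ring
    simp only [this]
    push_cast
    ring

/-- For `j < i` the numerator of `κ_{j,l}` contains `P_i` exactly once, at the argument shifted by
`-h d_i / 2`, since `a_{ij} = -1`. -/
lemma num_rev (a : Fin ℓ → Fin ℓ → ℤ) (d : Fin ℓ → ℕ)
    (hdiag : ∀ i, a i i = 2)
    (hsymm : ∀ i j, (d i : ℤ) * a i j = (d j : ℤ) * a j i)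
    (h : ℂ) (i j : Fin ℓ) (hji : j < i) (haij : a i j = -1) (γ : Pt m) (t : ℂ) :
    num a d h j γ t = numRest a d h j i γ t * Pp γ i (t - h * d i / 2) := by
  have hpr : pr a d j i = -(d i : ℂ) := by
    have hs := hsymm i j
    rw [haij] at hs
    have : (d j : ℤ) * a j i = -(d i : ℤ) := by linarith
    unfold pr
    exact_mod_cast this
  have hprii : pr a d i i = 2 * (d i : ℂ) := by simp [pr, hdiag]; ring
  rw [num_eq _ _ _ _ _ _ _ hji, haij, hpr, hprii]
  simp
  left
  congr 1
  ring

/-! ### Numerators of the Serre combination -/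

/-- The numerators of the words `E_i E_i E_j − 2 E_i E_j E_i + E_j E_i E_i`, where the two factors
`E_i` move the `k`-th and then the `k'`-th coordinate, and `E_j` moves the `l`-th one. -/
def Qn (a : Fin ℓ → Fin ℓ → ℤ) (d : Fin ℓ → ℕ) (h : ℂ) (i j : Fin ℓ) (l : Fin (m j))
    (γ : Pt m) (k k' : Fin (m i)) : ℂ :=
  let x := γ ⟨i, k⟩
  let x' := sh γ i k (-(h * (d i : ℂ))) ⟨i, k'⟩
  let y := γ ⟨j, l⟩
  let γj := sh γ j l (-(h * (d j : ℂ)))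
  let γi := sh γ i k (-(h * (d i : ℂ)))
  let γii := sh γi i k' (-(h * (d i : ℂ)))
  num a d h i γ x * num a d h i γ x' * num a d h j γii y
    - 2 * (num a d h i γ x * num a d h i γj x' * num a d h j γi y)
    + num a d h i γj x * num a d h i γj x' * num a d h j γ y

lemma Qn_diag (a : Fin ℓ → Fin ℓ → ℤ) (d : Fin ℓ → ℕ)
    (hdiag : ∀ i, a i i = 2) (hdpos : ∀ i, 0 < d i)
    (hsymm : ∀ i j, (d i : ℤ) * a i j = (d j : ℤ) * a j i)
    (h : ℂ) (i j : Fin ℓ) (hij : i ≠ j) (haij : a i j = -1) (l : Fin (m j)) (γ : Pt m)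
    (k : Fin (m i)) : Qn a d h i j l γ k k = 0 := by
  simp only [Qn, sh_self]
  rcases lt_or_gt_of_ne hij with hlt | hlt
  · simp only [num_sh a d h j i _ _ _ _ hlt.not_gt]
    obtain ⟨ρ, h1, h2⟩ := num_factor a d hdiag hdpos hsymm h i j hlt haij l γ (γ ⟨i, k⟩)
    obtain ⟨ρ', h1', h2'⟩ := num_factor a d hdiag hdpos hsymm h i j hlt haij l γ
      (γ ⟨i, k⟩ + -(h * (d i : ℂ)))
    rw [h1, h2, h1', h2']
    ring
  · simp only [num_sh a d h i j _ _ _ _ hlt.not_gt]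
    simp only [num_rev a d hdiag hsymm h i j hlt haij, numRest_sh]
    rw [Pp_sh, Pp_sh, Pp_eq γ i k, sh_self]
    have : ∀ u, ∏ p ∈ Finset.univ.erase k, (u - sh γ i k (-(h * (d i : ℂ))) ⟨i, p⟩) =
        ∏ p ∈ Finset.univ.erase k, (u - γ ⟨i, p⟩) := fun u =>
      Finset.prod_congr rfl fun p hp => by
        rw [sh_other _ _ _ _ _ (Finset.ne_of_mem_erase hp)]
    rw [this]
    ring

/-- For `k ≠ k'` the numerator is a function symmetric in `k, k'` times the linear factor
`γ_{i,k'} − γ_{i,k} + h d_i`, which cancels the corresponding factor of the denominator. -/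
lemma Qn_offdiag (a : Fin ℓ → Fin ℓ → ℤ) (d : Fin ℓ → ℕ)
    (hdiag : ∀ i, a i i = 2) (hdpos : ∀ i, 0 < d i)
    (hsymm : ∀ i j, (d i : ℤ) * a i j = (d j : ℤ) * a j i)
    (h : ℂ) (i j : Fin ℓ) (hij : i ≠ j) (haij : a i j = -1) (l : Fin (m j)) (γ : Pt m)
    (k k' : Fin (m i)) (hk : k ≠ k') :
    ∃ S : ℂ, Qn a d h i j l γ k k' = S * (γ ⟨i, k'⟩ - γ ⟨i, k⟩ + h * d i) ∧
      Qn a d h i j l γ k' k = S * (γ ⟨i, k⟩ - γ ⟨i, k'⟩ + h * d i) := by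
  simp only [Qn, sh_other _ _ _ _ _ hk, sh_other _ _ _ _ _ hk.symm]
  rcases lt_or_gt_of_ne hij with hlt | hlt
  · simp only [num_sh a d h j i _ _ _ _ hlt.not_gt]
    obtain ⟨ρ, h1, h2⟩ := num_factor a d hdiag hdpos hsymm h i j hlt haij l γ (γ ⟨i, k⟩)
    obtain ⟨ρ', h1', h2'⟩ := num_factor a d hdiag hdpos hsymm h i j hlt haij l γ (γ ⟨i, k'⟩)
    rw [h1, h2, h1', h2']
    refine ⟨ρ * ρ' * (h * d i) * num a d h j γ (γ ⟨j, l⟩), ?_, ?_⟩ <;> ring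
  · simp only [num_sh a d h i j _ _ _ _ hlt.not_gt]
    simp only [num_rev a d hdiag hsymm h i j hlt haij, numRest_sh]
    -- Split off the factors of `P_i` belonging to `k` and `k'`.
    have key : ∀ (γ' : Pt m) (u : ℂ), (∀ p, p ≠ k → p ≠ k' → γ' ⟨i, p⟩ = γ ⟨i, p⟩) →
        Pp γ' i u = (u - γ' ⟨i, k⟩) * (u - γ' ⟨i, k'⟩) *
          ∏ p ∈ (Finset.univ.erase k).erase k', (u - γ ⟨i, p⟩) := by
      intro γ' u hγ
      rw [Pp_eq _ _ k, ← Finset.mul_prod_erase (Finset.univ.erase k) _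
        (Finset.mem_erase.2 ⟨hk.symm, Finset.mem_univ k'⟩), mul_assoc]
      congr 2
      refine Finset.prod_congr rfl fun p hp => ?_
      rw [hγ p (Finset.ne_of_mem_erase (Finset.mem_of_mem_erase hp)) (Finset.ne_of_mem_erase hp)]
    have o1 : ∀ (γ' : Pt m) (c : ℂ) p, p ≠ k → sh γ' i k c ⟨i, p⟩ = γ' ⟨i, p⟩ :=
      fun γ' c p hp => sh_other _ _ _ _ _ hp
    have o2 : ∀ (γ' : Pt m) (c : ℂ) p, p ≠ k' → sh γ' i k' c ⟨i, p⟩ = γ' ⟨i, p⟩ :=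
      fun γ' c p hp => sh_other _ _ _ _ _ hp
    rw [key (sh (sh γ i k _) i k' _) _ (fun p hp hp' => by rw [o2 _ _ _ hp', o1 _ _ _ hp]),
      key (sh (sh γ i k' _) i k _) _ (fun p hp hp' => by rw [o1 _ _ _ hp, o2 _ _ _ hp']),
      key (sh γ i k _) _ (fun p hp hp' => by rw [o1 _ _ _ hp]),
      key (sh γ i k' _) _ (fun p hp hp' => by rw [o2 _ _ _ hp']),
      key γ _ (fun p hp hp' => rfl)]
    simp only [sh_self, o1 _ _ _ hk.symm, o2 _ _ _ hk]
    refine ⟨num a d h i γ (γ ⟨i, k⟩) * num a d h i γ (γ ⟨i, k'⟩) * (h * d i) *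
      (numRest a d h j i γ (γ ⟨j, l⟩) * ∏ p ∈ (Finset.univ.erase k).erase k',
        (γ ⟨j, l⟩ - h * d i / 2 - γ ⟨i, p⟩)), ?_, ?_⟩ <;> ring

/-! ### Denominators -/

lemma Dk_eq (γ : Pt m) (i : Fin ℓ) (k k' : Fin (m i)) (hk : k ≠ k') :
    Dk γ i k = (γ ⟨i, k⟩ - γ ⟨i, k'⟩) *
      ∏ p ∈ (Finset.univ.erase k).erase k', (γ ⟨i, k⟩ - γ ⟨i, p⟩) :=
  (Finset.mul_prod_erase _ _ (Finset.mem_erase.2 ⟨hk.symm, Finset.mem_univ k'⟩)).symm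

lemma Dk_sh (γ : Pt m) (i : Fin ℓ) (k k' : Fin (m i)) (hk : k ≠ k') (c : ℂ) :
    Dk (sh γ i k c) i k' = (γ ⟨i, k'⟩ - (γ ⟨i, k⟩ + c)) *
      ∏ p ∈ (Finset.univ.erase k).erase k', (γ ⟨i, k'⟩ - γ ⟨i, p⟩) := by
  rw [Dk_eq _ _ k' k hk.symm, sh_self, sh_other _ _ _ _ _ hk.symm, Finset.erase_right_comm]
  congr 1
  refine Finset.prod_congr rfl fun p hp => ?_
  rw [sh_other _ _ _ _ _ (Finset.ne_of_mem_erase (Finset.mem_of_mem_erase hp))]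

/-! ### Expansion of the words and antisymmetry of the coefficients -/

/-- The rational function `[(u − γ_{i,k})(w − γ'_{i,k'}) D_k(γ) D_{k'}(γ') (v − γ_{j,l}) D_l(γ)]⁻¹`
times the shifted value of `f`, where `γ' = γ − h d_i e_{i,k}`; it does not depend on the position
of `E_j(v)` in the word. -/
def Wt (d : Fin ℓ → ℕ) (h : ℂ) (i j : Fin ℓ) (v : ℂ) (f : Pt m → ℂ) (γ : Pt m) (l : Fin (m j))
    (u w : ℂ) (k k' : Fin (m i)) : ℂ :=
  let γi := sh γ i k (-(h * (d i : ℂ)))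
  (u - γ ⟨i, k⟩)⁻¹ * (w - γi ⟨i, k'⟩)⁻¹ * ((Dk γ i k)⁻¹ * (Dk γi i k')⁻¹) *
    ((v - γ ⟨j, l⟩)⁻¹ * (Dk γ j l)⁻¹ *
      f (sh (sh γi i k' (-(h * (d i : ℂ)))) j l (-(h * (d j : ℂ)))))

lemma Eop_sub (a : Fin ℓ → Fin ℓ → ℤ) (d : Fin ℓ → ℕ) (h u : ℂ) (i : Fin ℓ)
    (F G : Pt m → ℂ) (γ : Pt m) :
    Eop a d h u i (fun γ' => F γ' - G γ') γ = Eop a d h u i F γ - Eop a d h u i G γ := by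
  simp only [Eop, kap_eq, ← Finset.sum_sub_distrib]
  exact Finset.sum_congr rfl fun k _ => by ring

lemma word_iij (a : Fin ℓ → Fin ℓ → ℤ) (d : Fin ℓ → ℕ) (h : ℂ) (i j : Fin ℓ) (hij : i ≠ j)
    (u w v : ℂ) (f : Pt m → ℂ) (γ : Pt m) :
    Eop a d h u i (Eop a d h w i (Eop a d h v j f)) γ =
      ∑ l, ∑ k, ∑ k', Wt d h i j v f γ l u w k k' *
        (num a d h i γ (γ ⟨i, k⟩) * num a d h i γ (sh γ i k (-(h * (d i : ℂ))) ⟨i, k'⟩) *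
          num a d h j (sh (sh γ i k (-(h * (d i : ℂ)))) i k' (-(h * (d i : ℂ)))) (γ ⟨j, l⟩)) := by
  rw [Finset.sum_comm]
  simp only [Eop, kap_eq, Finset.mul_sum]
  refine Finset.sum_congr rfl fun k _ => ?_
  rw [Finset.sum_comm]
  refine Finset.sum_congr rfl fun l _ => Finset.sum_congr rfl fun k' _ => ?_
  simp only [Wt, Dk_sh_ne _ _ _ _ _ _ hij.symm, sh_ne _ _ _ _ _ _ hij.symm,
    num_sh a d h i i _ _ _ _ (lt_irrefl i)]
  ring

lemma word_iji (a : Fin ℓ → Fin ℓ → ℤ) (d : Fin ℓ → ℕ) (h : ℂ) (i j : Fin ℓ) (hij : i ≠ j)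
    (u w v : ℂ) (f : Pt m → ℂ) (γ : Pt m) :
    Eop a d h u i (Eop a d h v j (Eop a d h w i f)) γ =
      ∑ l, ∑ k, ∑ k', Wt d h i j v f γ l u w k k' *
        (num a d h i γ (γ ⟨i, k⟩) *
          num a d h i (sh γ j l (-(h * (d j : ℂ)))) (sh γ i k (-(h * (d i : ℂ))) ⟨i, k'⟩) *
          num a d h j (sh γ i k (-(h * (d i : ℂ)))) (γ ⟨j, l⟩)) := by
  rw [Finset.sum_comm]
  simp only [Eop, kap_eq, Finset.mul_sum]
  refine Finset.sum_congr rfl fun k _ => ?_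
  refine Finset.sum_congr rfl fun l _ => Finset.sum_congr rfl fun k' _ => ?_
  have e := sh_comm γ i j k l (-(h * (d i : ℂ))) (-(h * (d j : ℂ)))
  have e' := sh_comm (sh γ i k (-(h * (d i : ℂ)))) i j k' l (-(h * (d i : ℂ))) (-(h * (d j : ℂ)))
  have n1 : num a d h i (sh (sh γ i k (-(h * (d i : ℂ)))) j l (-(h * (d j : ℂ)))) =
      num a d h i (sh γ j l (-(h * (d j : ℂ)))) := by
    funext t
    rw [e, num_sh a d h i i _ _ _ _ (lt_irrefl i)]
  simp only [Wt, e', n1, Dk_sh_ne _ _ _ _ _ _ hij.symm, sh_ne _ _ _ _ _ _ hij.symm,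
    Dk_sh_ne _ _ _ _ _ _ hij, sh_ne _ _ _ _ _ _ hij]
  ring

lemma word_jii (a : Fin ℓ → Fin ℓ → ℤ) (d : Fin ℓ → ℕ) (h : ℂ) (i j : Fin ℓ) (hij : i ≠ j)
    (u w v : ℂ) (f : Pt m → ℂ) (γ : Pt m) :
    Eop a d h v j (Eop a d h u i (Eop a d h w i f)) γ =
      ∑ l, ∑ k, ∑ k', Wt d h i j v f γ l u w k k' *
        (num a d h i (sh γ j l (-(h * (d j : ℂ)))) (γ ⟨i, k⟩) *
          num a d h i (sh γ j l (-(h * (d j : ℂ)))) (sh γ i k (-(h * (d i : ℂ))) ⟨i, k'⟩) *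
          num a d h j γ (γ ⟨j, l⟩)) := by
  simp only [Eop, kap_eq, Finset.mul_sum]
  refine Finset.sum_congr rfl fun l _ => ?_
  refine Finset.sum_congr rfl fun k _ => Finset.sum_congr rfl fun k' _ => ?_
  have e := sh_comm γ i j k l (-(h * (d i : ℂ))) (-(h * (d j : ℂ)))
  have e' := sh_comm (sh γ i k (-(h * (d i : ℂ)))) i j k' l (-(h * (d i : ℂ))) (-(h * (d j : ℂ)))
  have n1 : num a d h i (sh (sh γ i k (-(h * (d i : ℂ)))) j l (-(h * (d j : ℂ)))) =
      num a d h i (sh γ j l (-(h * (d j : ℂ)))) := by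
    funext t
    rw [e, num_sh a d h i i _ _ _ _ (lt_irrefl i)]
  simp only [Wt, e', ← e, n1, Dk_sh_ne _ _ _ _ _ _ hij, sh_ne _ _ _ _ _ _ hij]
  ring

/-- After symmetrization in `u, w` the coefficient of a given shift of `f` is antisymmetric in
`k, k'`. -/
lemma coeff_antisymm (a : Fin ℓ → Fin ℓ → ℤ) (d : Fin ℓ → ℕ)
    (hdiag : ∀ i, a i i = 2) (hdpos : ∀ i, 0 < d i)
    (hsymm : ∀ i j, (d i : ℤ) * a i j = (d j : ℤ) * a j i)
    (h : ℂ) (i j : Fin ℓ) (hij : i ≠ j) (haij : a i j = -1) (u w v : ℂ)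
    (f : Pt m → ℂ) (γ : Pt m)
    (hDi : ∀ k : Fin (m i), Dk γ i k ≠ 0)
    (hDis : ∀ (k k' : Fin (m i)), Dk (sh γ i k (-(h * (d i : ℂ)))) i k' ≠ 0)
    (l : Fin (m j)) (k k' : Fin (m i)) :
    (Wt d h i j v f γ l u w k k' + Wt d h i j v f γ l w u k k') * Qn a d h i j l γ k k' =
      -((Wt d h i j v f γ l u w k' k + Wt d h i j v f γ l w u k' k) * Qn a d h i j l γ k' k) := by
  by_cases hk : k = k'
  · subst hk
    rw [Qn_diag a d hdiag hdpos hsymm h i j hij haij]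
    ring
  obtain ⟨S, h1, h2⟩ := Qn_offdiag a d hdiag hdpos hsymm h i j hij haij l γ k k' hk
  have hk2 : k' ≠ k := Ne.symm hk
  have n1 := hDi k
  have n2 := hDi k'
  have n3 := hDis k k'
  have n4 := hDis k' k
  have hD : (Dk γ i k)⁻¹ * (Dk (sh γ i k (-(h * (d i : ℂ)))) i k')⁻¹ *
      (γ ⟨i, k'⟩ - γ ⟨i, k⟩ + h * d i) =
      -((Dk γ i k')⁻¹ * (Dk (sh γ i k' (-(h * (d i : ℂ)))) i k)⁻¹ *
        (γ ⟨i, k⟩ - γ ⟨i, k'⟩ + h * d i)) := by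
    rw [Dk_eq _ _ _ _ hk] at n1
    rw [Dk_eq _ _ _ _ hk2, Finset.erase_right_comm] at n2
    rw [Dk_sh _ _ _ _ hk] at n3
    rw [Dk_sh _ _ _ _ hk2, Finset.erase_right_comm] at n4
    rw [Dk_sh _ _ _ _ hk, Dk_sh _ _ _ _ hk2, Dk_eq γ i k k' hk, Dk_eq γ i k' k hk2,
      Finset.erase_right_comm (a := k') (b := k)]
    generalize ∏ p ∈ (Finset.univ.erase k).erase k', (γ ⟨i, k⟩ - γ ⟨i, p⟩) = A at *
    generalize ∏ p ∈ (Finset.univ.erase k).erase k', (γ ⟨i, k'⟩ - γ ⟨i, p⟩) = B at *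
    obtain ⟨m1, mA⟩ := mul_ne_zero_iff.1 n1
    obtain ⟨m2, mB⟩ := mul_ne_zero_iff.1 n2
    have m3 := (mul_ne_zero_iff.1 n3).1
    have m4 := (mul_ne_zero_iff.1 n4).1
    rw [show γ ⟨i, k'⟩ - γ ⟨i, k⟩ + h * d i = γ ⟨i, k'⟩ - (γ ⟨i, k⟩ + -(h * d i)) by ring,
      show γ ⟨i, k⟩ - γ ⟨i, k'⟩ + h * d i = γ ⟨i, k⟩ - (γ ⟨i, k'⟩ + -(h * d i)) by ring,
      ← neg_sub (γ ⟨i, k⟩) (γ ⟨i, k'⟩)]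
    generalize γ ⟨i, k'⟩ - (γ ⟨i, k⟩ + -(h * d i)) = X at *
    generalize γ ⟨i, k⟩ - (γ ⟨i, k'⟩ + -(h * d i)) = Y at *
    generalize γ ⟨i, k⟩ - γ ⟨i, k'⟩ = Z at *
    field_simp
  rw [h1, h2]
  simp only [Wt, sh_comm γ i i k' k, sh_other _ _ _ _ _ hk, sh_other _ _ _ _ _ hk2]
  linear_combination (((u - γ ⟨i, k⟩)⁻¹ * (w - γ ⟨i, k'⟩)⁻¹ +
    (w - γ ⟨i, k⟩)⁻¹ * (u - γ ⟨i, k'⟩)⁻¹) * S * ((v - γ ⟨j, l⟩)⁻¹ * (Dk γ j l)⁻¹ *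
      f (sh (sh (sh γ i k (-(h * (d i : ℂ)))) i k' (-(h * (d i : ℂ)))) j l
        (-(h * (d j : ℂ)))))) * hD

/-- The Serre relation of the Yangian for `n = 1 − a_{ij} = 2`, verified for the
explicit difference operators:
`[E_i(u₁),[E_i(u₂),E_j(v)]] + [E_i(u₂),[E_i(u₁),E_j(v)]] = 0` when `a_{ij} = −1`. -/
theorem E_Serre_relation_n2
    (hℓ : 1 ≤ ℓ) (a : Fin ℓ → Fin ℓ → ℤ) (d : Fin ℓ → ℕ)
    (hdiag : ∀ i, a i i = 2) (hoff : ∀ i j, i ≠ j → a i j ≤ 0)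
    (hdpos : ∀ i, 0 < d i) (hsymm : ∀ i j, (d i : ℤ) * a i j = (d j : ℤ) * a j i)
    (h : ℂ) (i j : Fin ℓ) (hij : i ≠ j) (haij : a i j = -1)
    (u1 u2 v : ℂ)
    (f : Pt m → ℂ) (γ : Pt m)
    (hDi : ∀ k : Fin (m i), Dk γ i k ≠ 0)
    (hDis : ∀ (k k' : Fin (m i)), Dk (sh γ i k (-(h * (d i : ℂ)))) i k' ≠ 0)
    (hDj : ∀ l : Fin (m j), Dk γ j l ≠ 0)
    (hu1 : ∀ k : Fin (m i), u1 - γ ⟨i, k⟩ ≠ 0)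
    (hu1s : ∀ (k k' : Fin (m i)), u1 - (sh γ i k (-(h * (d i : ℂ)))) ⟨i, k'⟩ ≠ 0)
    (hu2 : ∀ k : Fin (m i), u2 - γ ⟨i, k⟩ ≠ 0)
    (hu2s : ∀ (k k' : Fin (m i)), u2 - (sh γ i k (-(h * (d i : ℂ)))) ⟨i, k'⟩ ≠ 0)
    (hv : ∀ l : Fin (m j), v - γ ⟨j, l⟩ ≠ 0) :
    ((Eop a d h u1 i
          (fun γ' => Eop a d h u2 i (Eop a d h v j f) γ' - Eop a d h v j (Eop a d h u2 i f) γ') γ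
        - (Eop a d h u2 i (Eop a d h v j (Eop a d h u1 i f)) γ
            - Eop a d h v j (Eop a d h u2 i (Eop a d h u1 i f)) γ))
      + (Eop a d h u2 i
          (fun γ' => Eop a d h u1 i (Eop a d h v j f) γ' - Eop a d h v j (Eop a d h u1 i f) γ') γ
        - (Eop a d h u1 i (Eop a d h v j (Eop a d h u2 i f)) γ
            - Eop a d h v j (Eop a d h u1 i (Eop a d h u2 i f)) γ))) = 0 := by
  rw [Eop_sub, Eop_sub]
  simp only [word_iij a d h i j hij, word_iji a d h i j hij, word_jii a d h i j hij]
  have hz : ∀ l : Fin (m j), ∑ k, ∑ k', (Wt d h i j v f γ l u1 u2 k k' +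
      Wt d h i j v f γ l u2 u1 k k') * Qn a d h i j l γ k k' = 0 := by
    intro l
    rw [← self_eq_neg]
    conv_rhs => rw [Finset.sum_comm]
    simp only [← Finset.sum_neg_distrib]
    exact Finset.sum_congr rfl fun k _ => Finset.sum_congr rfl fun k' _ =>
      coeff_antisymm a d hdiag hdpos hsymm h i j hij haij u1 u2 v f γ hDi hDis l k k'
  have hz' := Finset.sum_eq_zero (s := Finset.univ) fun l _ => hz l
  refine Eq.trans ?_ hz'
  simp only [← Finset.sum_sub_distrib, ← Finset.sum_add_distrib]
  refine Finset.sum_congr rfl fun l _ => Finset.sum_congr rfl fun k _ =>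
    Finset.sum_congr rfl fun k' _ => ?_
  simp only [Qn]
  ring

end
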